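/- Let B be a C*-algebra. If the set of projections of B residually supports B, then B has the ideal property. Conversely, if B is purely infinite and has the ideal property, then the set of projections of B residually supports B. -/

import Mathlib

/- Common definitions for C*-inclusions, ideals, Cuntz subequivalence,
   supporting/filling families and pure infiniteness. -/

namespace KM

variable {B : Type*} [NonUnitalCStarAlgebra B] [PartialOrder B]

/-- `J` is a closed two-sided ideal of the C*-algebra `C` (given as a subset of `B`). -/
def IsIdealIn (C J : Set B) : Prop :=
  J ⊆ C ∧ IsClosed J ∧ (0 : B) ∈ J ∧ (∀ x ∈ J, ∀ y ∈ J, x + y ∈ J) ∧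
    (∀ (c : ℂ), ∀ x ∈ J, c • x ∈ J) ∧ (∀ x ∈ J, ∀ c ∈ C, c * x ∈ J ∧ x * c ∈ J)

/-- `J` is a closed two-sided ideal of `B`. -/
def IsIdeal (J : Set B) : Prop := IsIdealIn Set.univ J

/-- `A` is a C*-subalgebra of `B`: a closed `*`-subalgebra. -/
def IsSubCStar (A : Set B) : Prop :=
  IsClosed A ∧ (0 : B) ∈ A ∧ (∀ x ∈ A, ∀ y ∈ A, x + y ∈ A) ∧
    (∀ (c : ℂ), ∀ x ∈ A, c • x ∈ A) ∧ (∀ x ∈ A, ∀ y ∈ A, x * y ∈ A) ∧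
    (∀ x ∈ A, star x ∈ A)

/-- The smallest closed two-sided ideal of the C*-algebra `C` containing `S`. -/
def idealGenIn (C S : Set B) : Set B := ⋂₀ {J : Set B | IsIdealIn C J ∧ S ⊆ J}

/-- The smallest closed two-sided ideal of `B` containing `S`; for an ideal `I` of a
subalgebra `A` this is the induced ideal `BIB`. -/
def idealGen (S : Set B) : Set B := idealGenIn Set.univ S

/-- `I` is a restricted ideal of the subalgebra `A`, i.e. `I = J ∩ A` for an ideal `J` of `B`. -/
def IsRestricted (A I : Set B) : Prop := ∃ J : Set B, IsIdeal J ∧ I = J ∩ A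

/-- `J` is an induced ideal of `B`: `J = BIB` for some ideal `I` of `A`. -/
def IsInduced (A J : Set B) : Prop := ∃ I : Set B, IsIdealIn A I ∧ J = idealGen I

/-- `A` separates ideals in `B`. -/
def SeparatesIdeals (A : Set B) : Prop :=
  ∀ J₁ J₂ : Set B, IsIdeal J₁ → IsIdeal J₂ → J₁ ∩ A = J₂ ∩ A → J₁ = J₂

/-- Cuntz subequivalence `a ≼ b`. -/
def CuntzBelow (a b : B) : Prop :=
  ∀ ε : ℝ, 0 < ε → ∃ x : B, ‖a - star x * b * x‖ < ε

/-- `F` supports `B`. -/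
def Supports (F : Set B) : Prop :=
  ∀ b : B, 0 ≤ b → b ≠ 0 → ∃ a ∈ F, a ≠ 0 ∧ CuntzBelow a b

/-- `F` residually supports the C*-algebra `C ⊆ B`: for every ideal `J` of `C`, the image
of `F` in `C/J` supports `C/J`, phrased concretely via the distance to `J`. -/
def ResiduallySupportsIn (C F : Set B) : Prop :=
  ∀ J : Set B, IsIdealIn C J → ∀ b ∈ C, 0 ≤ b → b ∉ J →
    ∃ a ∈ F, a ∉ J ∧ ∀ ε : ℝ, 0 < ε → ∃ x ∈ C,
      Metric.infDist (a - star x * b * x) J < ε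

/-- `F` residually supports `B`. -/
def ResiduallySupports (F : Set B) : Prop := ResiduallySupportsIn Set.univ F

/-- `x` lies in `aB = {a c : c ∈ B}`. -/
def MemRightMul (a x : B) : Prop := ∃ c : B, x = a * c

/-- `a` is properly infinite in `B`. -/
def ProperlyInfinite (a : B) : Prop :=
  ∀ ε : ℝ, 0 < ε → ∃ x y : B, MemRightMul a x ∧ MemRightMul a y ∧
    ‖star x * x - a‖ ≤ ε ∧ ‖star y * y - a‖ ≤ ε ∧ ‖star x * y‖ ≤ ε

/-- `a` is infinite in `B`. -/
def InfiniteElt (a : B) : Prop :=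
  ∃ b : B, 0 ≤ b ∧ b ≠ 0 ∧ ∀ ε : ℝ, 0 < ε → ∃ x y : B,
    MemRightMul a x ∧ MemRightMul a y ∧
    ‖star x * x - a‖ ≤ ε ∧ ‖star y * y - b‖ ≤ ε ∧ ‖star x * y‖ ≤ ε

/-- The pair `a, b` is separated in `B`. -/
def SeparatedPair (a b : B) : Prop :=
  ∀ ε : ℝ, 0 < ε → ∃ x y : B, MemRightMul a x ∧ MemRightMul b y ∧
    ‖star x * x - a‖ ≤ ε ∧ ‖star y * y - b‖ ≤ ε ∧ ‖star x * y‖ ≤ ε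

/-- A character of `B`: a nonzero multiplicative linear functional `B → ℂ`. -/
def IsCharacter (φ : B →ₗ[ℂ] ℂ) : Prop :=
  (∀ x y : B, φ (x * y) = φ x * φ y) ∧ φ ≠ 0

/-- `B` is purely infinite: it admits no characters and for nonzero positive `a, b`,
`a ≼ b` iff `a` lies in the ideal generated by `b`. -/
def PurelyInfinite (B : Type*) [NonUnitalCStarAlgebra B] [PartialOrder B] : Prop :=
  (¬ ∃ φ : B →ₗ[ℂ] ℂ, IsCharacter φ) ∧
    ∀ a b : B, 0 ≤ a → a ≠ 0 → 0 ≤ b → b ≠ 0 → (CuntzBelow a b ↔ a ∈ idealGen {b})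

/-- `p` is a projection. -/
def IsProjection (p : B) : Prop := star p = p ∧ p * p = p

/-- `B` has the ideal property: projections separate ideals. -/
def IdealProperty (B : Type*) [NonUnitalCStarAlgebra B] [PartialOrder B] : Prop :=
  ∀ J₁ J₂ : Set B, IsIdeal J₁ → IsIdeal J₂ →
    (∀ p : B, IsProjection p → (p ∈ J₁ ↔ p ∈ J₂)) → J₁ = J₂

/-- `B` is strongly purely infinite: every pair of positive elements is separated. -/
def StronglyPurelyInfinite (B : Type*) [NonUnitalCStarAlgebra B] [PartialOrder B] : Prop :=
  ∀ a b : B, 0 ≤ a → 0 ≤ b → SeparatedPair a b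

/-- `D` is a hereditary C*-subalgebra of `B`. -/
def IsHereditary (D : Set B) : Prop :=
  IsSubCStar D ∧ ∀ b d : B, d ∈ D → 0 ≤ b → b ≤ d → b ∈ D

/-- `F` fills `B`. -/
def Fills (F : Set B) : Prop :=
  ∀ D : Set B, IsHereditary D → (∃ d ∈ D, d ≠ 0) →
    ∀ J : Set B, IsIdeal J → ¬ D ⊆ J →
      ∃ z : B, z ∉ J ∧ z * star z ∈ D ∧ star z * z ∈ F

/-- Closed linear span of a subset of `B`. -/
def closSpan (S : Set B) : Set B := closure ↑(Submodule.span ℂ S)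

/-- The C*-inclusion `A ⊆ B` is symmetric. -/
def SymmetricInclusion (A : Set B) : Prop :=
  ∀ I : Set B, IsRestricted A I →
    closSpan {z : B | ∃ x ∈ I, ∃ b : B, z = x * b} =
      closSpan {z : B | ∃ b : B, ∃ x ∈ I, z = b * x}

/-- `b` is a normaliser of `A` in `B`. -/
def IsNormalizer (A : Set B) (b : B) : Prop :=
  (∀ a ∈ A, b * a * star b ∈ A) ∧ (∀ a ∈ A, star b * a * b ∈ A)

/-- The inclusion `A ⊆ B` is nondegenerate: the closed span of `A·B` is `B`. -/
def Nondegenerate (A : Set B) : Prop :=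
  closSpan {z : B | ∃ a ∈ A, ∃ b : B, z = a * b} = Set.univ

/-- The inclusion `A ⊆ B` is regular: nondegenerate and `B` is the closed linear span of
the normalisers of `A`. -/
def RegularInclusion (A : Set B) : Prop :=
  Nondegenerate A ∧ closSpan {b : B | IsNormalizer A b} = Set.univ

end KM

open KM

variable {B : Type*} [NonUnitalCStarAlgebra B] [PartialOrder B] [StarOrderedRing B]

/-! A closed left ideal containing `star x * x` contains `x`, since `x` is a limit of elements
`x * e` with `e` in the ideal a continuous function of `star x * x`; so inclusions of ideals can be
tested on positive elements. If `F` residually supports the algebra and `I ⊈ J`, pick a positive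
`b ∈ I \ J`: the element of `F` subequivalent to `b` modulo `I ∩ J` lies in `I` but not in `J`.
Conversely, if `F` separates ideals and `b ∉ J` is positive, then some element of `F` lies in the
ideal generated by `b` but not in `J`, and pure infiniteness turns this membership into Cuntz
subequivalence. -/

section CStarAlgebra

variable {A : Type*} [NonUnitalCStarAlgebra A]

theorem exists_isSelfAdjoint_mul_norm_sub_mul_le {a : A} (ha : IsSelfAdjoint a) {δ : ℝ}
    (hδ : 0 < δ) :
    ∃ h : A, IsSelfAdjoint (h * a) ∧ ‖h * a‖ ≤ 1 ∧ ‖a - a * (h * a)‖ ≤ δ := by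
  let f : ℝ → ℝ := fun t ↦ t / (δ ^ 2 + t ^ 2)
  have denom_pos (t : ℝ) : 0 < δ ^ 2 + t ^ 2 := by positivity
  have f_continuous : Continuous f :=
    continuous_id.div (by fun_prop) fun t ↦ (denom_pos t).ne'
  have mul_self_eq : cfcₙ f a * a = cfcₙ (fun t ↦ f t * t) a := by
    rw [cfcₙ_mul f (fun t ↦ t) a, cfcₙ_id' ℝ a]
  have sub_eq : a - a * (cfcₙ f a * a) = cfcₙ (fun t ↦ t - t * (f t * t)) a := by
    rw [cfcₙ_sub (fun t ↦ t) (fun t ↦ t * (f t * t)) a, cfcₙ_mul (fun t ↦ t) (fun t ↦ f t * t) a,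
      cfcₙ_id' ℝ a, mul_self_eq]
  refine ⟨cfcₙ f a, ?_, ?_, ?_⟩
  · rw [mul_self_eq]
    exact cfcₙ_predicate _ a
  · rw [mul_self_eq]
    refine norm_cfcₙ_le fun t _ ↦ ?_
    have : f t * t = t ^ 2 / (δ ^ 2 + t ^ 2) := by simp only [f]; ring
    rw [this, Real.norm_of_nonneg (by positivity), div_le_one (denom_pos t)]
    linarith [sq_nonneg δ]
  · rw [sub_eq]
    refine norm_cfcₙ_le fun t _ ↦ ?_
    have : t - t * (f t * t) = t * δ ^ 2 / (δ ^ 2 + t ^ 2) := by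
      have := (denom_pos t).ne'
      simp only [f]
      field_simp
      ring
    rw [this, Real.norm_eq_abs, abs_div, abs_mul, abs_of_pos (denom_pos t),
      abs_of_pos (pow_pos hδ 2), div_le_iff₀ (denom_pos t)]
    nlinarith [sq_nonneg (|t| - δ), sq_abs t, sq_nonneg t]

theorem sq_norm_sub_mul_le {x e : A} (he : IsSelfAdjoint e) (he_norm : ‖e‖ ≤ 1) :
    ‖x - x * e‖ ^ 2 ≤ 2 * ‖star x * x - star x * x * e‖ := by
  set d := star x * x - star x * x * e
  calc
    ‖x - x * e‖ ^ 2 = ‖star (x - x * e) * (x - x * e)‖ := by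
      rw [CStarRing.norm_star_mul_self, sq]
    _ = ‖d - e * d‖ := by
      rw [star_sub, star_mul, he.star_eq]
      simp only [d]
      noncomm_ring
    _ ≤ ‖d‖ + ‖e‖ * ‖d‖ := (norm_sub_le _ _).trans (by gcongr; exact norm_mul_le _ _)
    _ ≤ 2 * ‖d‖ := by nlinarith [norm_nonneg d]

theorem mem_of_star_mul_self_mem_of_isClosed {J : Set A} (hJ : IsClosed J)
    (mul_mem_left : ∀ c : A, ∀ x ∈ J, c * x ∈ J) {x : A} (hx : star x * x ∈ J) : x ∈ J := by
  rw [← hJ.closure_eq, Metric.mem_closure_iff]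
  intro ε hε
  obtain ⟨h, he, he_norm, h_dist⟩ :=
    exists_isSelfAdjoint_mul_norm_sub_mul_le (.star_mul_self x) (by positivity : 0 < ε ^ 2 / 4)
  set e := h * (star x * x)
  refine ⟨x * e, mul_mem_left x _ (mul_mem_left h _ hx), ?_⟩
  rw [dist_eq_norm]
  refine lt_of_pow_lt_pow_left₀ 2 hε.le ?_
  calc
    ‖x - x * e‖ ^ 2 ≤ 2 * ‖star x * x - star x * x * e‖ := sq_norm_sub_mul_le he he_norm
    _ ≤ 2 * (ε ^ 2 / 4) := by gcongr
    _ < ε ^ 2 := by linarith [pow_pos hε 2]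

end CStarAlgebra

namespace KM

section Ideals

variable {A : Type*} [NonUnitalCStarAlgebra A] {C I J : Set A}

theorem isIdealIn_sInter {S : Set (Set A)} (hS : S.Nonempty) (hS_ideal : ∀ J ∈ S, IsIdealIn C J) :
    IsIdealIn C (⋂₀ S) := by
  refine ⟨?_, isClosed_sInter fun J hJ ↦ (hS_ideal J hJ).2.1, ?_, ?_, ?_, ?_⟩
  · obtain ⟨J, hJ⟩ := hS
    exact (Set.sInter_subset_of_mem hJ).trans (hS_ideal J hJ).1
  · exact fun J hJ ↦ (hS_ideal J hJ).2.2.1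
  · exact fun x hx y hy J hJ ↦ (hS_ideal J hJ).2.2.2.1 x (hx J hJ) y (hy J hJ)
  · exact fun c x hx J hJ ↦ (hS_ideal J hJ).2.2.2.2.1 c x (hx J hJ)
  · exact fun x hx c hc ↦
      ⟨fun J hJ ↦ ((hS_ideal J hJ).2.2.2.2.2 x (hx J hJ) c hc).1,
        fun J hJ ↦ ((hS_ideal J hJ).2.2.2.2.2 x (hx J hJ) c hc).2⟩

theorem IsIdealIn.inter (hI : IsIdealIn C I) (hJ : IsIdealIn C J) : IsIdealIn C (I ∩ J) := by
  rw [← Set.sInter_pair]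
  refine isIdealIn_sInter (Set.insert_nonempty _ _) ?_
  rintro K (rfl | rfl)
  exacts [hI, hJ]

theorem isIdeal_univ : IsIdeal (Set.univ : Set A) := by
  simp [IsIdeal, IsIdealIn]

theorem isIdeal_idealGen (S : Set A) : IsIdeal (idealGen S) :=
  isIdealIn_sInter ⟨Set.univ, isIdeal_univ, S.subset_univ⟩ fun _ hJ ↦ hJ.1

theorem subset_idealGen (S : Set A) : S ⊆ idealGen S :=
  Set.subset_sInter fun _ hJ ↦ hJ.2

theorem IsIdeal.mul_mem_left (hJ : IsIdeal J) (c : A) {x : A} (hx : x ∈ J) : c * x ∈ J :=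
  (hJ.2.2.2.2.2 x hx c trivial).1

theorem IsIdeal.mul_mem_right (hJ : IsIdeal J) (c : A) {x : A} (hx : x ∈ J) : x * c ∈ J :=
  (hJ.2.2.2.2.2 x hx c trivial).2

theorem IsIdeal.star_mul_self_mem_iff (hJ : IsIdeal J) {x : A} : star x * x ∈ J ↔ x ∈ J :=
  ⟨mem_of_star_mul_self_mem_of_isClosed hJ.2.1 fun c _ ↦ hJ.mul_mem_left c,
    hJ.mul_mem_left (star x)⟩

theorem IsIdeal.exists_nonneg_mem_notMem [PartialOrder A] [StarOrderedRing A] (hI : IsIdeal I)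
    (hJ : IsIdeal J) (hIJ : ¬ I ⊆ J) : ∃ b ∈ I, 0 ≤ b ∧ b ∉ J := by
  obtain ⟨x, hxI, hxJ⟩ := Set.not_subset.1 hIJ
  exact ⟨star x * x, hI.star_mul_self_mem_iff.2 hxI, star_mul_self_nonneg x,
    hJ.star_mul_self_mem_iff.not.2 hxJ⟩

theorem IsIdeal.mem_of_infDist_sub_conjugate_lt (hI : IsIdeal I) (hJ : J.Nonempty) (hJI : J ⊆ I)
    {a b : A} (hb : b ∈ I)
    (hab : ∀ ε : ℝ, 0 < ε → ∃ x : A, Metric.infDist (a - star x * b * x) J < ε) : a ∈ I := by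
  rw [← hI.2.1.closure_eq, Metric.mem_closure_iff]
  intro ε hε
  obtain ⟨x, hx⟩ := hab ε hε
  obtain ⟨j, hj, hj_dist⟩ := (Metric.infDist_lt_iff hJ).1 hx
  have conjugate_mem : star x * b * x ∈ I := hI.mul_mem_right x (hI.mul_mem_left (star x) hb)
  refine ⟨star x * b * x + j, hI.2.2.2.1 _ conjugate_mem _ (hJI hj), ?_⟩
  rwa [dist_eq_norm, sub_sub, ← dist_eq_norm] at hj_dist

end Ideals

section SeparatingIdeals

variable {A : Type*} [NonUnitalCStarAlgebra A] {F : Set A}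

theorem separatesIdeals_iff_subset : SeparatesIdeals F ↔
    ∀ I J : Set A, IsIdeal I → IsIdeal J → I ∩ F ⊆ J → I ⊆ J := by
  refine ⟨fun hF I J hI hJ hIJ ↦ ?_, fun hF I J hI hJ hIJ ↦ ?_⟩
  · have inter_eq : I ∩ F = I ∩ J ∩ F := by
      rw [Set.inter_right_comm, Set.inter_eq_left.2 hIJ]
    exact Set.left_eq_inter.1 (hF I (I ∩ J) hI (hI.inter hJ) inter_eq)
  · exact (hF I J hI hJ (hIJ.trans_subset Set.inter_subset_left)).antisymm
      (hF J I hJ hI (hIJ.symm.trans_subset Set.inter_subset_left))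

variable [PartialOrder A]

theorem idealProperty_iff_separatesIdeals :
    IdealProperty A ↔ SeparatesIdeals {p : A | IsProjection p} := by
  simp only [IdealProperty, SeparatesIdeals, Set.ext_iff, Set.mem_inter_iff, Set.mem_ofPred_eq,
    and_congr_left_iff]

theorem IsProjection.nonneg [StarOrderedRing A] {p : A} (hp : IsProjection p) : 0 ≤ p :=
  IsStarProjection.nonneg ⟨hp.2, hp.1⟩

theorem ResiduallySupports.separatesIdeals [StarOrderedRing A] (hF : ResiduallySupports F) :
    SeparatesIdeals F := by
  refine separatesIdeals_iff_subset.2 fun I J hI hJ hIJ ↦ ?_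
  by_contra not_subset
  obtain ⟨b, hbI, hb, hbJ⟩ := hI.exists_nonneg_mem_notMem hJ not_subset
  obtain ⟨a, haF, ha, hab⟩ := hF (I ∩ J) (hI.inter hJ) b trivial hb fun h ↦ hbJ h.2
  have inter_nonempty : (I ∩ J).Nonempty := ⟨0, hI.2.2.1, hJ.2.2.1⟩
  have haI : a ∈ I :=
    hI.mem_of_infDist_sub_conjugate_lt inter_nonempty Set.inter_subset_left hbI
      fun ε hε ↦ (hab ε hε).imp fun _ hx ↦ hx.2
  exact ha ⟨haI, hIJ ⟨haI, haF⟩⟩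

theorem SeparatesIdeals.residuallySupports (hF : SeparatesIdeals F)
    (cuntzBelow_of_mem : ∀ a ∈ F, a ≠ 0 → ∀ b : A, 0 ≤ b → b ≠ 0 → a ∈ idealGen {b} →
      CuntzBelow a b) :
    ResiduallySupports F := by
  intro J hJ b _ hb hbJ
  have not_subset : ¬ idealGen {b} ⊆ J := fun h ↦ hbJ (h (subset_idealGen {b} rfl))
  obtain ⟨a, ⟨ha_mem, haF⟩, haJ⟩ := Set.not_subset.1 <|
    mt (separatesIdeals_iff_subset.1 hF _ J (isIdeal_idealGen {b}) hJ) not_subset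
  have ne_zero_of_notMem {c : A} (hc : c ∉ J) : c ≠ 0 := fun h ↦ hc (h ▸ hJ.2.2.1)
  refine ⟨a, haF, haJ, fun ε hε ↦ ?_⟩
  obtain ⟨x, hx⟩ := cuntzBelow_of_mem a haF (ne_zero_of_notMem haJ) b hb (ne_zero_of_notMem hbJ)
    ha_mem ε hε
  refine ⟨x, trivial, (Metric.infDist_le_dist_of_mem hJ.2.2.1).trans_lt ?_⟩
  rwa [dist_zero_right]

end SeparatingIdeals

end KM

theorem stmt7_general (F : Set B) :
    (ResiduallySupports F → SeparatesIdeals F) ∧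
    ((∀ a ∈ F, a ≠ 0 → ∀ b : B, 0 ≤ b → b ≠ 0 → a ∈ idealGen {b} → CuntzBelow a b) →
      SeparatesIdeals F → ResiduallySupports F) :=
  ⟨fun hF ↦ hF.separatesIdeals, fun hB hF ↦ hF.residuallySupports hB⟩

/-- If the projections of `B` residually support `B`, then `B` has the ideal property;
conversely a purely infinite C*-algebra with the ideal property is residually supported by
its projections. -/
theorem stmt7 :
    (ResiduallySupports {p : B | IsProjection p} → IdealProperty B) ∧
    (PurelyInfinite B → IdealProperty B →
      ResiduallySupports {p : B | IsProjection p}) := by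
  rw [idealProperty_iff_separatesIdeals]
  exact (stmt7_general _).imp_right fun h hB ↦
    h fun p hp hp0 b hb hb0 ↦ (hB.2 p b hp.nonneg hp0 hb hb0).2
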